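/- Let n be a positive even integer and z ∈ I^FPF_n. For a subset S = {(a_1,b_1),…,(a_l,b_l)} ⊆ [n]×[n] listed so that a_1 ≤ a_2 ≤ ⋯ ≤ a_l and b_k > b_{k+1} whenever a_k = a_{k+1}, set δ(S) = (b_1 + a_1 − 1, b_2 + a_2 − 1, …, b_l + a_l − 1) and x^S = x_{a_1} x_{a_2} ⋯ x_{a_l}. Then 𝔊^Sp_z = Σ_S β^{|S| − ℓ_fpf(z)} x^S, the sum over all subsets S ⊆ [n]×[n] such that δ(S) is a symplectic Hecke word for z. -/

import Mathlib

open MvPolynomial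

noncomputable section

/-- The coefficient ring `ℤ[β]`. -/
abbrev Rb : Type := Polynomial ℤ

/-- The indeterminate `β`. -/
def bb : Rb := Polynomial.X

/-- The order-reversing permutation `n⋯321`, i.e. `i ↦ n+1-i` in 1-indexed notation. -/
def revPerm (n : ℕ) : Equiv.Perm (Fin n) :=
  ⟨Fin.rev, Fin.rev, fun i => Fin.rev_rev i, fun i => Fin.rev_rev i⟩

/-- `z` is a fixed-point-free involution. -/
def IsFPF {n : ℕ} (z : Equiv.Perm (Fin n)) : Prop :=
  z * z = 1 ∧ ∀ i, z i ≠ i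

/-- `x_i + x_j + β x_i x_j`. -/
def oplus {n : ℕ} (i j : Fin n) : MvPolynomial (Fin n) Rb :=
  X i + X j + C bb * (X i * X j)

/-- `IsDivDiffB i j f g` encodes `∂_i^{(β)} f = g` where `j = i+1`:
`∂_i^{(β)} f = ((1+βx_j) f - s_i((1+βx_j) f)) / (x_i - x_j)`, stated multiplicatively
(the quotient is exact, and `g` is uniquely determined since the ring is a domain). -/
def IsDivDiffB {n : ℕ} (i j : Fin n) (f g : MvPolynomial (Fin n) Rb) : Prop :=
  (X i - X j) * g =
    (1 + C bb * X j) * f - rename ⇑(Equiv.swap i j) ((1 + C bb * X j) * f)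

/-- `∏_{1 ≤ i < j ≤ n-i} (x_i + x_j + β x_i x_j)` (variables 0-indexed). -/
def spTop (n : ℕ) : MvPolynomial (Fin n) Rb :=
  ∏ p ∈ Finset.univ.filter
      (fun p : Fin n × Fin n => p.1 < p.2 ∧ (p.1 : ℕ) + (p.2 : ℕ) + 2 ≤ n),
    oplus p.1 p.2

/-- `x_1^{n-1} x_2^{n-2} ⋯ x_{n-1}^1` (variables 0-indexed). -/
def grTop (n : ℕ) : MvPolynomial (Fin n) Rb :=
  ∏ a : Fin n, X a ^ (n - 1 - (a : ℕ))

/-- The defining property of the family of symplectic Grothendieck polynomials. -/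
def IsSpFam (n : ℕ) (G : Equiv.Perm (Fin n) → MvPolynomial (Fin n) Rb) : Prop :=
  G (revPerm n) = spTop n ∧
    ∀ z : Equiv.Perm (Fin n), IsFPF z →
      ∀ i j : Fin n, (j : ℕ) = (i : ℕ) + 1 →
        z i ≠ j → z j ≠ i → z j < z i →
          IsDivDiffB i j (G z) (G (Equiv.swap i j * z * Equiv.swap i j))

/-- The defining property of the family of Grothendieck polynomials. -/
def IsGrothFam (n : ℕ) (G : Equiv.Perm (Fin n) → MvPolynomial (Fin n) Rb) : Prop :=
  G (revPerm n) = grTop n ∧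
    ∀ (w : Equiv.Perm (Fin n)) (i j : Fin n), (j : ℕ) = (i : ℕ) + 1 →
      w j < w i → IsDivDiffB i j (G w) (G (w * Equiv.swap i j))

/-- The length (number of inversions) of a permutation. -/
def invLen {n : ℕ} (w : Equiv.Perm (Fin n)) : ℕ :=
  (Finset.univ.filter (fun p : Fin n × Fin n => p.1 < p.2 ∧ w p.2 < w p.1)).card

/-- The fixed-point-free involution length `ℓ_fpf(z) = #{(i,j) : z(i) > z(j) < i < j}`. -/
def fpfLen {n : ℕ} (z : Equiv.Perm (Fin n)) : ℕ :=
  (Finset.univ.filter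
      (fun p : Fin n × Fin n => z p.2 < z p.1 ∧ z p.2 < p.1 ∧ p.1 < p.2)).card

/-- The underlying function of `Θ = (1,2)(3,4)⋯(n-1,n)`. -/
def thetaFun (n : ℕ) (hn : n % 2 = 0) (i : Fin n) : Fin n :=
  ⟨if (i : ℕ) % 2 = 0 then (i : ℕ) + 1 else (i : ℕ) - 1, by
    have hi := i.isLt
    split_ifs with h <;> omega⟩

/-- The fixed-point-free involution `Θ = (1,2)(3,4)⋯(n-1,n)`. -/
def theta (n : ℕ) (hn : n % 2 = 0) : Equiv.Perm (Fin n) :=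
  Function.Involutive.toPerm (thetaFun n hn) (by
    intro i
    have hi := i.isLt
    apply Fin.ext
    simp only [thetaFun]
    split_ifs <;> omega)

/-- One step of the partial Hecke action: `heckeStep a z = some (z · s_{a+1})` when defined,
with `a` a 0-indexed letter (so `a` corresponds to the simple transposition of `a+1, a+2`
in 1-indexed notation). -/
def heckeStep {n : ℕ} (a : ℕ) (z : Equiv.Perm (Fin n)) : Option (Equiv.Perm (Fin n)) :=
  if h : a + 1 < n then
    let i : Fin n := ⟨a, Nat.lt_of_succ_lt h⟩
    let j : Fin n := ⟨a + 1, h⟩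
    if z i < z j then some (Equiv.swap i j * z * Equiv.swap i j)
    else if z i = j ∧ z j = i then none
    else if z i ≠ j ∧ z j ≠ i ∧ z j < z i then some z
    else none
  else none

/-- Apply a word of (0-indexed) letters to `z` via the partial Hecke action. -/
def heckeApply {n : ℕ} (l : List ℕ) (z : Equiv.Perm (Fin n)) :
    Option (Equiv.Perm (Fin n)) :=
  l.foldl (fun o a => o.bind (heckeStep a)) (some z)

/-- The simple transposition corresponding to the 0-indexed letter `a`. -/
def swapAt (n : ℕ) (a : ℕ) : Equiv.Perm (Fin n) :=
  if h : a + 1 < n then Equiv.swap ⟨a, Nat.lt_of_succ_lt h⟩ ⟨a + 1, h⟩ else 1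

/-- The permutation `s_{i_1} s_{i_2} ⋯ s_{i_l}` of a word. -/
def wordToPerm (n : ℕ) (l : List ℕ) : Equiv.Perm (Fin n) := (l.map (swapAt n)).prod

/-- `l` is a reduced word for `w`. -/
def IsReducedWord (n : ℕ) (w : Equiv.Perm (Fin n)) (l : List ℕ) : Prop :=
  (∀ a ∈ l, a + 1 < n) ∧ wordToPerm n l = w ∧ l.length = invLen w

/-- The set of Hecke atoms `B_fpf(z)`. -/
def Bfpf (n : ℕ) (hn : n % 2 = 0) (z : Equiv.Perm (Fin n)) :
    Finset (Equiv.Perm (Fin n)) :=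
  @Finset.filter _
    (fun w => ∃ l : List ℕ, IsReducedWord n w l ∧ heckeApply l (theta n hn) = some z)
    (Classical.decPred _) Finset.univ

/-- `extPerm z w` is the permutation `z × w` acting on the first `m` letters by `z`
and the last `n` letters by `w`. -/
def extPerm {m n : ℕ} (z : Equiv.Perm (Fin m)) (w : Equiv.Perm (Fin n)) :
    Equiv.Perm (Fin (m + n)) :=
  finSumFinEquiv.symm.trans ((Equiv.sumCongr z w).trans finSumFinEquiv)

/-- `rank(z_{[i][j]}) = #{k ∈ [j] : z(k) ≤ i}` (1-indexed sizes `i, j`). -/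
def permRank {n : ℕ} (z : Equiv.Perm (Fin n)) (i j : ℕ) : ℕ :=
  (Finset.univ.filter (fun k : Fin n => (k : ℕ) < j ∧ ((z k : Fin n) : ℕ) < i)).card

/-- The rank of the upper-left `i × j` corner of `A` (1-indexed sizes `i, j ≤ n`). -/
def cornerRank {n : ℕ} (A : Matrix (Fin n) (Fin n) ℂ) (i j : ℕ) : ℕ :=
  Matrix.rank (Matrix.of fun (a : Fin (min i n)) (b : Fin (min j n)) =>
    A ⟨(a : ℕ), lt_of_lt_of_le a.isLt (min_le_right i n)⟩
      ⟨(b : ℕ), lt_of_lt_of_le b.isLt (min_le_right j n)⟩)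

/-- The orthogonal Rothe diagram `D^O(z) = {(i, z(j)) : z(i) > z(j) ≤ i < j}` (0-indexed). -/
def DO (n : ℕ) (z : Equiv.Perm (Fin n)) : Finset (Fin n × Fin n) :=
  Finset.image (fun p : Fin n × Fin n => (p.1, z p.2))
    (Finset.univ.filter (fun p : Fin n × Fin n => z p.2 < z p.1 ∧ z p.2 ≤ p.1 ∧ p.1 < p.2))

/-- The symplectic Rothe diagram `D^Sp(z) = {(i, z(j)) : z(i) > z(j) < i < j}` (0-indexed). -/
def DSp (n : ℕ) (z : Equiv.Perm (Fin n)) : Finset (Fin n × Fin n) :=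
  Finset.image (fun p : Fin n × Fin n => (p.1, z p.2))
    (Finset.univ.filter (fun p : Fin n × Fin n => z p.2 < z p.1 ∧ z p.2 < p.1 ∧ p.1 < p.2))

/-- The essential set `Ess(D) = {(i,j) ∈ D : (i,j+1) ∉ D and (i+1,j) ∉ D}`. -/
def Ess {n : ℕ} (D : Finset (Fin n × Fin n)) : Finset (Fin n × Fin n) :=
  D.filter (fun p =>
    (∀ q ∈ D, ¬(q.1 = p.1 ∧ (q.2 : ℕ) = (p.2 : ℕ) + 1)) ∧
    (∀ q ∈ D, ¬((q.1 : ℕ) = (p.1 : ℕ) + 1 ∧ q.2 = p.2)))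

/-- A permutation is vexillary if it avoids the pattern 2143. -/
def Vexillary {n : ℕ} (z : Equiv.Perm (Fin n)) : Prop :=
  ¬ ∃ i j k l : Fin n, i < j ∧ j < k ∧ k < l ∧ z j < z i ∧ z i < z l ∧ z l < z k

/-- The ideal of `ℤ[x_1,…,x_N]` generated by symmetric polynomials with zero constant term. -/
def ILambda (N : ℕ) : Ideal (MvPolynomial (Fin N) ℤ) :=
  Ideal.span {f : MvPolynomial (Fin N) ℤ |
    (∀ σ : Equiv.Perm (Fin N), rename (⇑σ) f = f) ∧ coeff 0 f = 0}

/-- Substitute `x_j = 0` for all `j > n`, producing a polynomial in `x_1,…,x_n`. -/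
def truncVars (n N : ℕ) (f : MvPolynomial (Fin N) Rb) : MvPolynomial (Fin n) Rb :=
  aeval (fun i : Fin N => if h : (i : ℕ) < n then X ⟨(i : ℕ), h⟩ else 0) f

/-- The order used to list the elements of a pipe-dream subset `S`:
rows weakly increasing, columns strictly decreasing within a row. -/
def rowOrder {n : ℕ} (p q : Fin n × Fin n) : Prop :=
  p.1 < q.1 ∨ (p.1 = q.1 ∧ q.2 < p.2)

/-- `δ(S)` is a symplectic Hecke word for `z` (with Hecke words computed from `Θ`);
here `L` is the listing of `S` in the order `rowOrder`, and `(a,b) ∈ S` (0-indexed)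
contributes the 0-indexed letter `a + b`, i.e. the 1-indexed letter `(b+1)+(a+1)-1`. -/
def DeltaHeckeWord (n : ℕ) (hn : n % 2 = 0) (z : Equiv.Perm (Fin n))
    (S : Finset (Fin n × Fin n)) : Prop :=
  ∃ L : List (Fin n × Fin n), L.toFinset = S ∧ L.Chain' rowOrder ∧
    heckeApply (L.map (fun p => (p.1 : ℕ) + (p.2 : ℕ))) (theta n hn) = some z

/-!
The operators `u_c` acting on functions on the set of fixed-point-free involutions, as the transpose
of the `β`-deformed Hecke action, satisfy the relations of an id-Coxeter algebra: `u_c² = β u_c`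
together with the braid relations. Following Fomin and Kirillov, put `h_c(x) = 1 + x u_c`. The sum
over `S` in the theorem is the coefficient at `z` of a product of factors `h_{i+j}(x_i)`, one for
each box `(i, j)`, applied to the indicator function of `Θ`.

The Yang–Baxter equation for the `h_c` shows how this product changes when `x_i` and `x_{i+1}` are
exchanged, and at a descent of `z` that is the recursion `∂_i^{(β)} 𝔊_z = 𝔊_{s_i z s_i}`. Since
every `z` is reached from `n⋯321` through descents, it remains to find the value at `n⋯321`.

There the special shape of `Θ` enters: `u_a Θ = 0` and `u_a u_{a+1} Θ = u_{a+2} u_{a+1} Θ` for `a`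
even (counting from `0`). With these boundary relations the square of boxes folds along its
diagonal, by the Yang–Baxter equation again, onto the boxes `i < j` with weights `x_i ⊕ x_j`. The
only subset of the folded boxes long enough to reach `n⋯321` is the whole triangle, so the value is
`0` or `∏ (x_i ⊕ x_j)`. It is not `0`, since then all values would vanish by the recursion, while
the value at `Θ` has constant term `1`.
-/

section IdCoxeter

variable {R E : Type*} [CommRing R] [Ring E] [Algebra R E]

/-- The formal group law `x ⊕ y = x + y + b x y`. -/
def fglAdd (b x y : R) : R := x + y + b * (x * y)

/-- The elements `u 0, u 1, …` satisfy the relations of the id-Coxeter algebra of the symmetric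
group `S_{N+1}` with parameter `b`, whose generators are `u 0, …, u (N - 1)`. The sequence is
continued by zero, so that no bounds have to be tracked in the relations. -/
structure IsIdCoxeter (b : R) (u : ℕ → E) (N : ℕ) : Prop where
  sq (c : ℕ) : u c * u c = b • u c
  commute {c d : ℕ} : c + 2 ≤ d → Commute (u c) (u d)
  braid (c : ℕ) : u c * (u (c + 1) * u c) = u (c + 1) * (u c * u (c + 1))
  eq_zero {c : ℕ} : N ≤ c → u c = 0

/-- The Fomin–Kirillov factor `h_c(x) = 1 + x u_c`. -/
def fkFactor (u : ℕ → E) (c : ℕ) (x : R) : E := 1 + x • u c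

/-- The ascending product `A_a(x) = h_a(x) h_{a+1}(x) ⋯ h_{N-1}(x)`. -/
def ascProd (u : ℕ → E) (N a : ℕ) (x : R) : E :=
  ((List.Ico a N).map fun c => fkFactor u c x).prod

/-- The descending product `B_a(x) = h_{N-1}(x) ⋯ h_{a+1}(x) h_a(x)`. -/
def descProd (u : ℕ → E) (N a : ℕ) (x : R) : E :=
  ((List.Ico a N).reverse.map fun c => fkFactor u c x).prod

/-- The product `A_{k-1}(x_{k-1}) ⋯ A_1(x_1) A_0(x_0)`: the first `k` rows of the generating
function of pipe dreams, read from bottom to top. -/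
def rowProd (u : ℕ → E) (N : ℕ) (x : ℕ → R) (k : ℕ) : E :=
  ((List.range k).reverse.map fun i => ascProd u N i (x i)).prod

theorem downward_induction {p : ℕ → Prop} (N : ℕ) (base : ∀ a, N ≤ a → p a)
    (step : ∀ a, p (a + 1) → p a) (a : ℕ) : p a :=
  Nat.decreasingInduction (n := max a N) (motive := fun a _ => p a) (fun a _ => step a)
    (base _ (le_max_right _ _)) (le_max_left _ _)

section Products

variable {u : ℕ → E} {N : ℕ}

theorem ascProd_of_le {a : ℕ} (ha : N ≤ a) (x : R) : ascProd u N a x = 1 := by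
  rw [ascProd, List.Ico.eq_nil_of_le ha, List.map_nil, List.prod_nil]

theorem descProd_of_le {a : ℕ} (ha : N ≤ a) (x : R) : descProd u N a x = 1 := by
  rw [descProd, List.Ico.eq_nil_of_le ha, List.reverse_nil, List.map_nil, List.prod_nil]

theorem commute_ascProd {e : E} {a : ℕ} {x : R}
    (he : ∀ c, a ≤ c → Commute e (fkFactor u c x)) : Commute e (ascProd u N a x) :=
  Commute.list_prod_right _ _ fun y hy => by
    obtain ⟨c, hc, rfl⟩ := List.mem_map.mp hy
    exact he c (List.Ico.mem.mp hc).1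

theorem commute_descProd {e : E} {a : ℕ} {x : R}
    (he : ∀ c, a ≤ c → Commute e (fkFactor u c x)) : Commute e (descProd u N a x) :=
  Commute.list_prod_right _ _ fun y hy => by
    obtain ⟨c, hc, rfl⟩ := List.mem_map.mp hy
    exact he c (List.Ico.mem.mp (List.mem_reverse.mp hc)).1

theorem rowProd_succ (x : ℕ → R) (k : ℕ) :
    rowProd u N x (k + 1) = ascProd u N k (x k) * rowProd u N x k := by
  simp only [rowProd, List.range_succ, List.reverse_append, List.reverse_singleton,
    List.singleton_append, List.map_cons, List.prod_cons]

theorem rowProd_congr {x y : ℕ → R} {k : ℕ} (hxy : ∀ i < k, x i = y i) :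
    rowProd u N x k = rowProd u N y k := by
  refine congrArg List.prod (List.map_congr_left fun i hi => ?_)
  rw [hxy i (by simpa using hi)]

end Products

namespace IsIdCoxeter

variable {b : R} {u : ℕ → E} {N : ℕ}

theorem fkFactor_of_le (h : IsIdCoxeter b u N) {c : ℕ} (hc : N ≤ c) (x : R) :
    fkFactor u c x = 1 := by
  rw [fkFactor, h.eq_zero hc, smul_zero, add_zero]

theorem ascProd_eq_mul (h : IsIdCoxeter b u N) (a : ℕ) (x : R) :
    ascProd u N a x = fkFactor u a x * ascProd u N (a + 1) x := by
  rcases lt_or_ge a N with ha | ha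
  · rw [ascProd, List.Ico.eq_cons ha, List.map_cons, List.prod_cons, ascProd]
  · rw [ascProd_of_le ha, ascProd_of_le (by lia), h.fkFactor_of_le ha, one_mul]

theorem descProd_eq_mul (h : IsIdCoxeter b u N) (a : ℕ) (x : R) :
    descProd u N a x = descProd u N (a + 1) x * fkFactor u a x := by
  rcases lt_or_ge a N with ha | ha
  · simp only [descProd, List.Ico.eq_cons ha, List.reverse_cons, List.map_append, List.map_cons,
      List.map_nil, List.prod_append, List.prod_singleton]
  · rw [descProd_of_le ha, descProd_of_le (by lia), h.fkFactor_of_le ha, one_mul]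

theorem ascProd_eq_prod_range (h : IsIdCoxeter b u N) {a m : ℕ} (ham : N ≤ a + m) (x : R) :
    ascProd u N a x = ((List.range m).map fun j => fkFactor u (a + j) x).prod := by
  induction m generalizing a with
  | zero => rw [ascProd_of_le (by lia)]; rfl
  | succ m ih =>
    rw [h.ascProd_eq_mul, ih (by lia), List.range_succ_eq_map, List.map_cons, List.prod_cons,
      List.map_map]
    simp only [Function.comp_def, Nat.succ_eq_add_one, add_zero, add_assoc, add_comm 1]

theorem commute_gen_fkFactor (h : IsIdCoxeter b u N) {c d : ℕ} (hcd : c + 2 ≤ d) (x : R) :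
    Commute (u c) (fkFactor u d x) :=
  (Commute.one_right _).add_right ((h.commute hcd).smul_right x)

theorem commute_fkFactor (h : IsIdCoxeter b u N) {c d : ℕ} (hcd : c + 2 ≤ d) (x y : R) :
    Commute (fkFactor u c x) (fkFactor u d y) :=
  (Commute.one_left _).add_left ((h.commute_gen_fkFactor hcd y).smul_left x)

theorem commute_gen_ascProd (h : IsIdCoxeter b u N) {c a : ℕ} (hca : c + 2 ≤ a) (x : R) :
    Commute (u c) (ascProd u N a x) :=
  commute_ascProd fun _ hd => h.commute_gen_fkFactor (hca.trans hd) x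

theorem commute_fkFactor_ascProd (h : IsIdCoxeter b u N) {c a : ℕ} (hca : c + 2 ≤ a) (x y : R) :
    Commute (fkFactor u c x) (ascProd u N a y) :=
  commute_ascProd fun _ hd => h.commute_fkFactor (hca.trans hd) x y

theorem commute_fkFactor_descProd (h : IsIdCoxeter b u N) {c a : ℕ} (hca : c + 2 ≤ a) (x y : R) :
    Commute (fkFactor u c x) (descProd u N a y) :=
  commute_descProd fun _ hd => h.commute_fkFactor (hca.trans hd) x y

theorem yang_baxter (h : IsIdCoxeter b u N) (c : ℕ) (x y : R) :
    fkFactor u c x * fkFactor u (c + 1) (fglAdd b y x) * fkFactor u c y =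
      fkFactor u (c + 1) y * fkFactor u c (fglAdd b y x) * fkFactor u (c + 1) x := by
  simp only [fkFactor, fglAdd, mul_add, add_mul, mul_one, one_mul, smul_mul_assoc, mul_smul_comm,
    smul_add, smul_smul, mul_assoc, h.sq, h.braid]
  module

theorem ascProd_mul_descProd (h : IsIdCoxeter b u N) (x w : R) (a : ℕ) :
    ascProd u N a w * descProd u N a x =
      descProd u N (a + 1) x * fkFactor u a (fglAdd b x w) * ascProd u N (a + 1) w := by
  induction a using downward_induction N with
  | base a ha =>
    have ha' : N ≤ a + 1 := by lia
    simp only [ascProd_of_le ha, ascProd_of_le ha', descProd_of_le ha, descProd_of_le ha',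
      h.fkFactor_of_le ha, mul_one]
  | step a ih =>
    have comm_desc := (h.commute_fkFactor_descProd (le_refl (a + 2)) w x).eq
    have comm_asc := (h.commute_fkFactor_ascProd (le_refl (a + 2)) x w).eq
    calc ascProd u N a w * descProd u N a x
        = fkFactor u a w * (ascProd u N (a + 1) w * descProd u N (a + 1) x) * fkFactor u a x := by
          rw [h.ascProd_eq_mul a, h.descProd_eq_mul a]; simp only [mul_assoc]
      _ = fkFactor u a w * descProd u N (a + 2) x * fkFactor u (a + 1) (fglAdd b x w) *
            (ascProd u N (a + 2) w * fkFactor u a x) := by rw [ih]; simp only [mul_assoc]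
      _ = descProd u N (a + 2) x *
            (fkFactor u a w * fkFactor u (a + 1) (fglAdd b x w) * fkFactor u a x) *
            ascProd u N (a + 2) w := by rw [comm_desc, ← comm_asc]; simp only [mul_assoc]
      _ = descProd u N (a + 1) x * fkFactor u a (fglAdd b x w) * ascProd u N (a + 1) w := by
          rw [h.yang_baxter, h.descProd_eq_mul (a + 1), h.ascProd_eq_mul (a + 1)]
          simp only [mul_assoc]

theorem fkFactor_swap (h : IsIdCoxeter b u N) (a : ℕ) (x y : R) :
    fkFactor u (a + 1) x * fkFactor u a y * ((1 + b * x) • 1 - (x - y) • u (a + 1)) =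
      ((1 + b * x) • 1 - (x - y) • u a) * (fkFactor u (a + 1) y * fkFactor u a x) := by
  simp only [fkFactor, mul_add, add_mul, mul_sub, sub_mul, mul_one, one_mul, smul_mul_assoc,
    mul_smul_comm, smul_add, smul_sub, smul_smul, mul_assoc, h.sq, h.braid]
  module

theorem ascProd_mul_ascProd (h : IsIdCoxeter b u N) (a : ℕ) (x y : R) :
    ascProd u N (a + 1) x * ascProd u N a y =
      fkFactor u (a + 1) x * fkFactor u a y *
        (ascProd u N (a + 2) x * ascProd u N (a + 1) y) := by
  have comm := (h.commute_fkFactor_ascProd (le_refl (a + 2)) y x).eq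
  rw [h.ascProd_eq_mul a, h.ascProd_eq_mul (a + 1) x, mul_assoc, ← mul_assoc (ascProd u N _ x),
    ← comm]
  simp only [mul_assoc]

theorem ascProd_swap (h : IsIdCoxeter b u N) (a : ℕ) (x y : R) :
    (1 + b * x) • (ascProd u N (a + 1) x * ascProd u N a y) =
      ((1 + b * x) • 1 - (x - y) • u a) * (ascProd u N (a + 1) y * ascProd u N a x) := by
  induction a using downward_induction N with
  | base a ha =>
    have ha' : N ≤ a + 1 := by lia
    simp only [ascProd_of_le ha, ascProd_of_le ha', h.eq_zero ha, smul_zero, sub_zero, mul_one]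
  | step a ih =>
    rw [h.ascProd_mul_ascProd a x y, ← mul_smul_comm, ih, ← mul_assoc, h.fkFactor_swap,
      h.ascProd_mul_ascProd a y x]
    simp only [mul_assoc]

theorem rowProd_comp_swap (h : IsIdCoxeter b u N) (x : ℕ → R) {a k : ℕ} (hak : a + 2 ≤ k) :
    (1 + b * x a) • rowProd u N (x ∘ Equiv.swap a (a + 1)) k =
      ((1 + b * x a) • 1 - (x a - x (a + 1)) • u a) * rowProd u N x k := by
  induction k, hak using Nat.le_induction with
  | base =>
    have lower : rowProd u N (x ∘ Equiv.swap a (a + 1)) a = rowProd u N x a :=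
      rowProd_congr fun i hi => by
        rw [Function.comp_apply, Equiv.swap_apply_of_ne_of_ne (by lia) (by lia)]
    simp only [rowProd_succ, lower, Function.comp_apply, Equiv.swap_apply_left,
      Equiv.swap_apply_right]
    rw [← mul_assoc, ← smul_mul_assoc, h.ascProd_swap]
    simp only [mul_assoc]
  | succ k hak ih =>
    have comm : Commute ((1 + b * x a) • 1 - (x a - x (a + 1)) • u a) (ascProd u N k (x k)) :=
      ((Commute.one_left _).smul_left _).sub_left ((h.commute_gen_ascProd hak _).smul_left _)
    rw [rowProd_succ, rowProd_succ, Function.comp_apply,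
      Equiv.swap_apply_of_ne_of_ne (by lia) (by lia), ← mul_smul_comm, ih, ← mul_assoc, ← comm.eq,
      mul_assoc]

end IsIdCoxeter

section Boundary

/-- The weight `x_i ⊕ x_j` of the box `(i, j)` in the symplectic pipe dream generating function;
it vanishes unless the box is strictly above the diagonal. -/
def spWeight (b : R) (x : ℕ → R) (i j : ℕ) : R := if i < j then fglAdd b (x i) (x j) else 0

/-- The weighted row `h_{i+k-1}(w_{i,k-1}) ⋯ h_{i+1}(w_{i,1}) h_i(w_{i,0})` where `w` is
`spWeight`. -/
def spRow (b : R) (u : ℕ → E) (x : ℕ → R) (i k : ℕ) : E :=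
  ((List.range k).reverse.map fun j => fkFactor u (i + j) (spWeight b x i j)).prod

/-- The product of the first `m` rows of the form `B_{i+k}(x_i) * spRow i k`, which interpolates
between `1` at `k = m = 0` and the symplectic rows `spRow`. -/
def mixedProd (b : R) (u : ℕ → E) (N : ℕ) (x : ℕ → R) (k m : ℕ) : E :=
  ((List.range m).map fun i => descProd u N (i + k) (x i) * spRow b u x i k).prod

variable {b : R} {u : ℕ → E} {N : ℕ} (x : ℕ → R)

theorem spRow_succ (i k : ℕ) :
    spRow b u x i (k + 1) = fkFactor u (i + k) (spWeight b x i k) * spRow b u x i k := by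
  simp only [spRow, List.range_succ, List.reverse_append, List.reverse_singleton,
    List.singleton_append, List.map_cons, List.prod_cons]

theorem spRow_of_le {i k : ℕ} (hk : k ≤ i + 1) : spRow b u x i k = 1 := by
  refine List.prod_eq_one fun y hy => ?_
  obtain ⟨j, hj, rfl⟩ := List.mem_map.mp hy
  have hji : ¬ i < j := by have := List.mem_range.mp (List.mem_reverse.mp hj); lia
  rw [spWeight, if_neg hji, fkFactor, zero_smul, add_zero]

theorem mixedProd_succ (k m : ℕ) :
    mixedProd b u N x k (m + 1) =
      mixedProd b u N x k m * (descProd u N (m + k) (x m) * spRow b u x m k) := by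
  simp only [mixedProd, List.range_succ, List.map_append, List.map_cons, List.map_nil,
    List.prod_append, List.prod_singleton]

namespace IsIdCoxeter

theorem commute_spRow_ascProd (h : IsIdCoxeter b u N) {i k a : ℕ} (ha : i + k + 1 ≤ a) (w : R) :
    Commute (spRow b u x i k) (ascProd u N a w) :=
  Commute.list_prod_left _ _ fun y hy => by
    obtain ⟨j, hj, rfl⟩ := List.mem_map.mp hy
    have hjk := List.mem_range.mp (List.mem_reverse.mp hj)
    exact h.commute_fkFactor_ascProd (by lia) _ _

theorem ascProd_mul_mixedRow (h : IsIdCoxeter b u N) {i k : ℕ} (hik : i < k) :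
    ascProd u N (i + k) (x k) * (descProd u N (i + k) (x i) * spRow b u x i k) =
      descProd u N (i + (k + 1)) (x i) * spRow b u x i (k + 1) *
        ascProd u N (i + k + 1) (x k) := by
  have comm := (h.commute_spRow_ascProd x (le_refl (i + k + 1)) (x k)).eq
  rw [← mul_assoc, h.ascProd_mul_descProd, spRow_succ, spWeight, if_pos hik,
    ← add_assoc i k 1]
  simp only [mul_assoc, comm]

theorem ascProd_mul_mixedProd (h : IsIdCoxeter b u N) {k m : ℕ} (hm : m ≤ k) :
    ascProd u N k (x k) * mixedProd b u N x k m =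
      mixedProd b u N x (k + 1) m * ascProd u N (m + k) (x k) := by
  induction m with
  | zero => simp only [mixedProd, List.range_zero, List.map_nil, List.prod_nil, mul_one, one_mul,
      zero_add]
  | succ m ih =>
    rw [mixedProd_succ, ← mul_assoc, ih (by lia), mul_assoc, h.ascProd_mul_mixedRow x hm,
      mixedProd_succ, add_right_comm m 1 k]
    simp only [mul_assoc]

end IsIdCoxeter

end Boundary

namespace IsIdCoxeter

variable {M : Type*} [AddCommGroup M] [Module R M] {b : R} {u : ℕ → Module.End R M} {N : ℕ}

theorem ascProd_apply_eq_descProd (h : IsIdCoxeter b u N) {θ : M}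
    (gen_even : ∀ a, Even a → u a θ = 0)
    (gen_gen : ∀ a, Even a → u a (u (a + 1) θ) = u (a + 2) (u (a + 1) θ)) (w : R) {a : ℕ}
    (ha : Even a) : ascProd u N a w θ = descProd u N (a + 1) w θ := by
  induction hd : N - a using Nat.strong_induction_on generalizing a with
  | _ d ih =>
  rcases le_or_gt N a with hN | hN
  · rw [ascProd_of_le hN, descProd_of_le (by lia)]
  have ha2 : Even (a + 2) := ha.add even_two
  have reflect : (fkFactor u a w * fkFactor u (a + 1) w) θ =
      (fkFactor u (a + 2) w * fkFactor u (a + 1) w) θ := by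
    simp only [fkFactor, Module.End.mul_apply, LinearMap.add_apply, Module.End.one_apply,
      LinearMap.smul_apply, map_add, map_smul, gen_even a ha, gen_even (a + 2) ha2, gen_gen a ha]
  have comm₀ := (h.commute_fkFactor_descProd (show a + 2 ≤ a + 3 by lia) w w).eq
  have comm₁ := (h.commute_fkFactor_descProd (show a + 1 + 2 ≤ a + 3 by lia) w w).eq
  calc ascProd u N a w θ
      = (fkFactor u a w * fkFactor u (a + 1) w) (ascProd u N (a + 2) w θ) := by
        rw [h.ascProd_eq_mul, h.ascProd_eq_mul (a + 1)]; rfl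
    _ = (fkFactor u a w * fkFactor u (a + 1) w * descProd u N (a + 3) w) θ := by
        rw [ih (N - (a + 2)) (by lia) ha2 rfl]; rfl
    _ = descProd u N (a + 3) w ((fkFactor u a w * fkFactor u (a + 1) w) θ) := by
        rw [mul_assoc, comm₁, ← mul_assoc, comm₀, mul_assoc]; rfl
    _ = descProd u N (a + 1) w θ := by
        rw [reflect, h.descProd_eq_mul (a + 1), h.descProd_eq_mul (a + 2)]; rfl

theorem rowProd_apply_eq_mixedProd (h : IsIdCoxeter b u N) {θ : M}
    (gen_even : ∀ a, Even a → u a θ = 0)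
    (gen_gen : ∀ a, Even a → u a (u (a + 1) θ) = u (a + 2) (u (a + 1) θ)) (x : ℕ → R) (k : ℕ) :
    rowProd u N x k θ = mixedProd b u N x k k θ := by
  induction k with
  | zero => rfl
  | succ k ih =>
    calc rowProd u N x (k + 1) θ
        = (ascProd u N k (x k) * mixedProd b u N x k k) θ := by
          rw [rowProd_succ, Module.End.mul_apply, ih]; rfl
      _ = mixedProd b u N x (k + 1) k (ascProd u N (k + k) (x k) θ) := by
          rw [h.ascProd_mul_mixedProd x le_rfl]; rfl
      _ = mixedProd b u N x (k + 1) k (descProd u N (k + (k + 1)) (x k) θ) := by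
          rw [h.ascProd_apply_eq_descProd gen_even gen_gen _ ⟨k, rfl⟩, add_assoc]
      _ = mixedProd b u N x (k + 1) (k + 1) θ := by
          rw [mixedProd_succ, spRow_of_le x le_rfl, mul_one]; rfl

end IsIdCoxeter

end IdCoxeter

section DescentOperators

variable {R X : Type*} [CommRing R]

/-- The operator on functions `f : X → R` attached to a map `σ` and a set `D` of descents:
`(u f)(x) = f(σ x) + b f(x)` if `x` is a descent and `0` otherwise. With descents
and conjugation by `s_c` this is the transpose of the `b`-deformed action of the letter `c`. -/
def descentOp (b : R) (D : X → Prop) [DecidablePred D] (σ : X → X) : Module.End R (X → R) where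
  toFun f x := if D x then f (σ x) + b * f x else 0
  map_add' f g := by
    funext x
    simp only [Pi.add_apply]
    split_ifs <;> ring
  map_smul' r f := by
    funext x
    simp only [Pi.smul_apply, smul_eq_mul, RingHom.id_apply]
    split_ifs <;> ring

variable (b : R) {D E : X → Prop} [DecidablePred D] [DecidablePred E] {σ τ : X → X}

theorem descentOp_apply (f : X → R) (x : X) :
    descentOp b D σ f x = if D x then f (σ x) + b * f x else 0 := rfl

theorem descentOp_mul_self (hσ : ∀ x, D x → ¬ D (σ x)) :
    descentOp b D σ * descentOp b D σ = b • descentOp b D σ := by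
  ext f x
  by_cases hx : D x
  · simp [descentOp_apply, hx, hσ x hx]
  · simp [descentOp_apply, hx]

theorem commute_descentOp (hσ : ∀ x, D x → ¬ D (σ x)) (hτ : ∀ x, E x → ¬ E (τ x))
    (comm : ∀ x, σ (τ x) = τ (σ x))
    (dichotomy : ∀ x, (σ x = τ x ∧ (D x ↔ E x)) ∨ ((D (τ x) ↔ D x) ∧ (E (σ x) ↔ E x))) :
    Commute (descentOp b D σ) (descentOp b E τ) := by
  refine LinearMap.ext fun f => funext fun x => ?_
  simp only [Module.End.mul_apply, descentOp_apply]
  rcases dichotomy x with ⟨hστ, hDE⟩ | ⟨hD, hE⟩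
  · by_cases hx : D x
    · have hx' := hDE.mp hx
      have hD : ¬ D (τ x) := hστ ▸ hσ x hx
      simp [hx, hx', hD, hτ x hx', hστ]
    · simp [hx, mt hDE.mpr hx]
  · simp only [hD, hE, comm]
    split_ifs <;> ring

theorem descentOp_braid (comm : ∀ x, σ (τ (σ x)) = τ (σ (τ x)))
    (hD : ∀ x, D x → (E x ↔ E (σ x) ∧ D (τ (σ x)))) (hE : ∀ x, E x → (D x ↔ D (τ x) ∧ E (σ (τ x))))
    (hσ : ∀ x, D x → ¬ D (σ x)) (hτ : ∀ x, E x → ¬ E (τ x)) :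
    descentOp b D σ * (descentOp b E τ * descentOp b D σ) =
      descentOp b E τ * (descentOp b D σ * descentOp b E τ) := by
  refine LinearMap.ext fun f => funext fun x => ?_
  simp only [Module.End.mul_apply, descentOp_apply]
  by_cases hx : D x <;> by_cases hx' : E x
  · obtain ⟨h1, h2⟩ := (hD x hx).mp hx'
    obtain ⟨h3, h4⟩ := (hE x hx').mp hx
    simp only [hx, hx', h1, h2, h3, h4, hσ x hx, hτ x hx', if_true, if_false, comm]
    ring
  · have := (hD x hx).not.mp hx'
    by_cases h1 : E (σ x) <;> simp_all
  · have := (hE x hx').not.mp hx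
    by_cases h1 : D (τ x) <;> simp_all
  · simp [hx, hx']

theorem descentOp_single [DecidableEq X] (hinv : Function.Involutive σ)
    (hσ : ∀ x, D x → ¬ D (σ x)) (w : X) :
    descentOp b D σ (Pi.single w 1) =
      if D w then b • Pi.single w 1 else if D (σ w) then Pi.single (σ w) 1 else 0 := by
  funext x
  have hσx : σ x = w ↔ x = σ w := hinv.eq_iff
  have hDw : D w → ¬ D (σ w) := hσ w
  rw [descentOp_apply]
  simp only [Pi.single_apply, hσx]
  split_ifs <;> simp [Pi.single_apply] <;> grind

end DescentOperators

section SwapOrder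

variable {α : Type*} [LinearOrder α] {i j : α}

theorem swap_lt_swap_iff (hij : i ⋖ j) {k l : α} (h₁ : ¬ (k = i ∧ l = j))
    (h₂ : ¬ (k = j ∧ l = i)) : Equiv.swap i j k < Equiv.swap i j l ↔ k < l := by
  have hlt := hij.lt
  have below : ∀ {m}, m < j ↔ m ≤ i := hij.lt_iff_le_left
  have above : ∀ {m}, i < m ↔ j ≤ m := hij.lt_iff_le_right
  simp only [Equiv.swap_apply_def]
  split_ifs <;> grind

end SwapOrder

/-- A permutation of `{0, …, n - 1}` as a permutation of `ℕ` fixing all `k ≥ n`. -/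
def natPerm (n : ℕ) : Equiv.Perm (Fin n) →* Equiv.Perm ℕ :=
  Equiv.Perm.viaEmbeddingHom Fin.valEmbedding

theorem natPerm_injective (n : ℕ) : Function.Injective (natPerm n) :=
  Equiv.Perm.viaEmbeddingHom_injective _

theorem natPerm_val {n : ℕ} (w : Equiv.Perm (Fin n)) (i : Fin n) : natPerm n w i = w i :=
  Equiv.Perm.viaEmbedding_apply w Fin.valEmbedding i

theorem natPerm_of_le {n k : ℕ} (w : Equiv.Perm (Fin n)) (hk : n ≤ k) : natPerm n w k = k :=
  Equiv.Perm.viaEmbedding_apply_of_notMem w Fin.valEmbedding k fun ⟨i, hi⟩ =>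
    i.isLt.not_ge (hk.trans_eq hi.symm)

theorem swapAt_of_lt {n c : ℕ} (hc : c + 1 < n) :
    swapAt n c = Equiv.swap ⟨c, Nat.lt_of_succ_lt hc⟩ ⟨c + 1, hc⟩ := dif_pos hc

theorem swapAt_of_le {n c : ℕ} (hc : n ≤ c + 1) : swapAt n c = 1 := dif_neg hc.not_gt

theorem natPerm_swapAt {n c : ℕ} (hc : c + 1 < n) :
    natPerm n (swapAt n c) = Equiv.swap c (c + 1) := by
  ext k
  rcases lt_or_ge k n with hk | hk
  · rw [natPerm_val _ ⟨k, hk⟩, swapAt_of_lt hc]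
    simp only [Equiv.swap_apply_def, Fin.ext_iff]
    split_ifs <;> rfl
  · rw [natPerm_of_le _ hk, Equiv.swap_apply_of_ne_of_ne (by lia) (by lia)]

theorem swapAt_mul_self (n c : ℕ) : swapAt n c * swapAt n c = 1 := by
  rcases lt_or_ge (c + 1) n with hc | hc
  · rw [swapAt_of_lt hc, Equiv.swap_mul_self]
  · rw [swapAt_of_le hc, one_mul]

theorem commute_swapAt {n c d : ℕ} (hcd : c + 2 ≤ d) : Commute (swapAt n c) (swapAt n d) := by
  rcases lt_or_ge (d + 1) n with hd | hd
  · refine natPerm_injective n (Equiv.ext fun k => ?_)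
    rw [map_mul, map_mul, natPerm_swapAt hd, natPerm_swapAt (by lia)]
    simp only [Equiv.Perm.mul_apply, Equiv.swap_apply_def]
    grind
  · rw [swapAt_of_le hd]
    exact Commute.one_right _

theorem swapAt_braid {n c : ℕ} (hc : c + 2 < n) :
    swapAt n c * swapAt n (c + 1) * swapAt n c =
      swapAt n (c + 1) * swapAt n c * swapAt n (c + 1) := by
  refine natPerm_injective n (Equiv.ext fun k => ?_)
  simp only [map_mul, natPerm_swapAt (show c + 1 < n by lia), natPerm_swapAt hc,
    Equiv.Perm.mul_apply, Equiv.swap_apply_def]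
  grind

/-- The type of fixed-point-free involutions in `S_n`. -/
abbrev FPF (n : ℕ) := {z : Equiv.Perm (Fin n) // IsFPF z}

namespace FPF

variable {n : ℕ} {c d : ℕ}

/-- The involution `z` extended by the identity to `ℕ`, so that values at `c` and `c + 1` can be
compared by arithmetic in `ℕ`. -/
def perm (z : FPF n) : Equiv.Perm ℕ := natPerm n z.1

/-- The conjugate `s_c z s_c`. -/
def conj (c : ℕ) (z : FPF n) : FPF n :=
  ⟨swapAt n c * z.1 * swapAt n c, by
    have hs := swapAt_mul_self n c
    refine ⟨?_, fun i hi => ?_⟩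
    · calc swapAt n c * z.1 * swapAt n c * (swapAt n c * z.1 * swapAt n c)
          = swapAt n c * z.1 * (swapAt n c * swapAt n c) * z.1 * swapAt n c := by
            simp only [mul_assoc]
        _ = 1 := by rw [hs, mul_one, mul_assoc (swapAt n c), z.2.1, mul_one, hs]
    · refine z.2.2 (swapAt n c i) ((swapAt n c).injective ?_)
      rw [Equiv.Perm.mul_apply, Equiv.Perm.mul_apply] at hi
      rw [hi, ← Equiv.Perm.mul_apply, hs, Equiv.Perm.one_apply]⟩

theorem coe_conj (c : ℕ) (z : FPF n) : (z.conj c).1 = swapAt n c * z.1 * swapAt n c := rfl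

/-- `c` is a descent of `z` which is not a two-cycle `(c, c + 1)` of `z`: the letters that fix `z`
under the Hecke action. -/
def IsDesc (c : ℕ) (z : FPF n) : Prop :=
  c + 1 < n ∧ z.perm (c + 1) < z.perm c ∧ z.perm c ≠ c + 1

/-- `c` is an ascent of `z`: the letters that conjugate `z` under the Hecke action. -/
def IsAsc (c : ℕ) (z : FPF n) : Prop := c + 1 < n ∧ z.perm c < z.perm (c + 1)

instance (c : ℕ) : DecidablePred (IsDesc (n := n) c) := fun _ => instDecidableAnd

instance (c : ℕ) : DecidablePred (IsAsc (n := n) c) := fun _ => instDecidableAnd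

theorem perm_val (z : FPF n) (i : Fin n) : z.perm i = z.1 i := natPerm_val z.1 i

theorem perm_ne (z : FPF n) {k : ℕ} (hk : k < n) : z.perm k ≠ k := by
  rw [z.perm_val ⟨k, hk⟩]
  exact fun h => z.2.2 ⟨k, hk⟩ (Fin.ext h)

theorem perm_mul_self (z : FPF n) : z.perm * z.perm = 1 := by
  rw [perm, ← map_mul, z.2.1, map_one]

theorem perm_perm (z : FPF n) (k : ℕ) : z.perm (z.perm k) = k :=
  congrArg (· k) z.perm_mul_self

theorem perm_eq_iff (z : FPF n) {k l : ℕ} : z.perm k = l ↔ z.perm l = k :=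
  ⟨fun h => h ▸ z.perm_perm k, fun h => h ▸ z.perm_perm l⟩

theorem perm_injective : Function.Injective (perm (n := n)) :=
  (natPerm_injective n).comp Subtype.val_injective

theorem perm_conj (hc : c + 1 < n) (z : FPF n) :
    (z.conj c).perm = Equiv.swap c (c + 1) * z.perm * Equiv.swap c (c + 1) := by
  rw [perm, conj, map_mul, map_mul, natPerm_swapAt hc]
  rfl

theorem perm_conj_apply (hc : c + 1 < n) (z : FPF n) (k : ℕ) :
    (z.conj c).perm k = Equiv.swap c (c + 1) (z.perm (Equiv.swap c (c + 1) k)) := by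
  rw [z.perm_conj hc]
  rfl

theorem conj_of_le (hc : n ≤ c + 1) (z : FPF n) : z.conj c = z :=
  Subtype.ext (by rw [coe_conj, swapAt_of_le hc, one_mul, mul_one])

theorem conj_involutive (c : ℕ) : Function.Involutive (conj (n := n) c) := fun z => by
  refine Subtype.ext ?_
  rw [coe_conj, coe_conj, mul_assoc, mul_assoc _ _ (swapAt n c), swapAt_mul_self, mul_one,
    ← mul_assoc, swapAt_mul_self, one_mul]

theorem conj_conj_comm (hcd : c + 2 ≤ d) (z : FPF n) : (z.conj d).conj c = (z.conj c).conj d := by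
  have comm : swapAt n c * swapAt n d = swapAt n d * swapAt n c := commute_swapAt hcd
  refine Subtype.ext ?_
  simp only [coe_conj, mul_assoc, ← comm]
  rw [← mul_assoc, comm, mul_assoc]

theorem conj_braid (hc : c + 2 < n) (z : FPF n) :
    ((z.conj c).conj (c + 1)).conj c = ((z.conj (c + 1)).conj c).conj (c + 1) := by
  have braid := swapAt_braid hc
  refine Subtype.ext ?_
  calc (((z.conj c).conj (c + 1)).conj c).1
      = swapAt n c * swapAt n (c + 1) * swapAt n c * z.1 *
        (swapAt n c * swapAt n (c + 1) * swapAt n c) := by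
          simp only [coe_conj, mul_assoc]
    _ = (((z.conj (c + 1)).conj c).conj (c + 1)).1 := by
          rw [braid]; simp only [coe_conj, mul_assoc]

theorem isDesc_conj_self (z : FPF n) : IsDesc c (z.conj c) ↔ IsAsc c z := by
  simp only [IsDesc, IsAsc, and_congr_right_iff]
  intro hc
  have := z.perm_ne hc
  have := z.perm_ne (k := c) (by lia)
  have := z.perm_eq_iff (k := c) (l := c + 1)
  simp only [z.perm_conj_apply hc, Equiv.swap_apply_left, Equiv.swap_apply_right,
    Equiv.swap_apply_def]
  grind

theorem IsDesc.not_conj {z : FPF n} (h : IsDesc c z) : ¬ IsDesc c (z.conj c) := fun h' =>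
  h.2.1.not_gt (z.isDesc_conj_self.mp h').2

section FarApart

/-- `z` maps the pair `{c, c + 1}` onto the pair `{d, d + 1}`. This is the one case in which the
letters `c` and `d` interact although they are far apart. -/
def MapsPair (z : FPF n) (c d : ℕ) : Prop :=
  (z.perm c = d ∧ z.perm (c + 1) = d + 1) ∨ (z.perm c = d + 1 ∧ z.perm (c + 1) = d)

theorem MapsPair.symm {z : FPF n} (h : z.MapsPair c d) : z.MapsPair d c := by
  rw [MapsPair, z.perm_eq_iff (k := d), z.perm_eq_iff (k := d + 1), z.perm_eq_iff (k := d),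
    z.perm_eq_iff (k := d + 1)]
  exact h.imp_right And.symm

theorem MapsPair.perm_mul_swap {z : FPF n} (h : z.MapsPair c d) :
    z.perm * Equiv.swap c (c + 1) = Equiv.swap d (d + 1) * z.perm := by
  rw [Equiv.mul_swap_eq_swap_mul]
  rcases h with ⟨h₁, h₂⟩ | ⟨h₁, h₂⟩
  · rw [h₁, h₂]
  · rw [h₁, h₂, Equiv.swap_comm]

theorem MapsPair.conj_eq {z : FPF n} (h : z.MapsPair c d) (hcd : c + 2 ≤ d) (hd : d + 1 < n) :
    z.conj c = z.conj d := by
  have hc : c + 1 < n := by lia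
  refine perm_injective ?_
  rw [z.perm_conj hc, z.perm_conj hd, mul_assoc, mul_assoc, h.perm_mul_swap, h.symm.perm_mul_swap,
    ← mul_assoc, ← mul_assoc, ← natPerm_swapAt hc, ← natPerm_swapAt hd, ← map_mul, ← map_mul,
    commute_swapAt hcd]

theorem MapsPair.isDesc_iff {z : FPF n} (h : z.MapsPair c d) (hcd : c + 2 ≤ d) (hd : d + 1 < n) :
    IsDesc c z ↔ IsDesc d z := by
  rcases h with ⟨h₁, h₂⟩ | ⟨h₁, h₂⟩ <;>
    simp only [IsDesc, h₁, h₂, z.perm_eq_iff.mp h₁, z.perm_eq_iff.mp h₂] <;> lia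

theorem MapsPair.isAsc_iff {z : FPF n} (h : z.MapsPair c d) (hcd : c + 2 ≤ d) (hd : d + 1 < n) :
    IsAsc c z ↔ IsAsc d z := by
  rcases h with ⟨h₁, h₂⟩ | ⟨h₁, h₂⟩ <;>
    simp only [IsAsc, h₁, h₂, z.perm_eq_iff.mp h₁, z.perm_eq_iff.mp h₂] <;> lia

theorem isDesc_conj_iff {z : FPF n} (hd : d + 1 < n) (hcd : c + 2 ≤ d ∨ d + 2 ≤ c)
    (h : ¬ z.MapsPair c d) : IsDesc c (z.conj d) ↔ IsDesc c z := by
  have fixed : ∀ k, k = c ∨ k = c + 1 → Equiv.swap d (d + 1) k = k := fun k hk =>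
    Equiv.swap_apply_of_ne_of_ne (by lia) (by lia)
  have hlt : (z.conj d).perm (c + 1) < (z.conj d).perm c ↔ z.perm (c + 1) < z.perm c := by
    rw [z.perm_conj_apply hd, z.perm_conj_apply hd, fixed c (.inl rfl), fixed (c + 1) (.inr rfl)]
    exact swap_lt_swap_iff (Order.covBy_add_one d) (fun h' => h (.inr h'.symm))
      (fun h' => h (.inl h'.symm))
  have hne : (z.conj d).perm c = c + 1 ↔ z.perm c = c + 1 := by
    rw [z.perm_conj_apply hd, fixed c (.inl rfl), ← fixed (c + 1) (.inr rfl),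
      (Equiv.injective _).eq_iff, fixed (c + 1) (.inr rfl)]
  rw [IsDesc, IsDesc, hlt, Ne, hne]

theorem conj_eq_or_isDesc_conj_iff (hcd : c + 2 ≤ d) (z : FPF n) :
    (z.conj c = z.conj d ∧ (IsDesc c z ↔ IsDesc d z)) ∨
      ((IsDesc c (z.conj d) ↔ IsDesc c z) ∧ (IsDesc d (z.conj c) ↔ IsDesc d z)) := by
  rcases lt_or_ge (d + 1) n with hd | hd
  · by_cases h : z.MapsPair c d
    · exact .inl ⟨h.conj_eq hcd hd, h.isDesc_iff hcd hd⟩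
    · exact .inr ⟨isDesc_conj_iff hd (.inl hcd) h,
        isDesc_conj_iff (by lia) (.inr hcd) (mt MapsPair.symm h)⟩
  · refine .inr ⟨by rw [z.conj_of_le hd], ?_⟩
    exact iff_of_false (fun h => h.1.not_ge hd) (fun h => h.1.not_ge hd)

end FarApart

section Braid

theorem isDesc_succ_iff {z : FPF n} (h : IsDesc c z) (hc : c + 2 < n) :
    IsDesc (c + 1) z ↔ IsDesc (c + 1) (z.conj c) ∧ IsDesc c ((z.conj c).conj (c + 1)) := by
  have hc' : c + 1 < n := h.1
  have := z.perm_ne hc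
  have := z.perm_ne hc'
  have := z.perm_ne (k := c) (by lia)
  have := z.perm_eq_iff (k := c) (l := c + 1)
  have := z.perm_eq_iff (k := c) (l := c + 2)
  have := z.perm_eq_iff (k := c + 1) (l := c + 2)
  have := z.perm.injective.ne (show c + 1 ≠ c + 2 by lia)
  have := z.perm.injective.ne (show c ≠ c + 2 by lia)
  unfold IsDesc at *
  simp only [perm_conj_apply hc', perm_conj_apply (show c + 1 + 1 < n from hc),
    Equiv.swap_apply_def]
  grind

theorem isDesc_iff_of_isDesc_succ {z : FPF n} (h : IsDesc (c + 1) z) :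
    IsDesc c z ↔ IsDesc c (z.conj (c + 1)) ∧ IsDesc (c + 1) ((z.conj (c + 1)).conj c) := by
  have hc : c + 1 + 1 < n := h.1
  have hc' : c + 1 < n := by lia
  have := z.perm_ne hc
  have := z.perm_ne hc'
  have := z.perm_ne (k := c) (by lia)
  have := z.perm_eq_iff (k := c) (l := c + 1)
  have := z.perm_eq_iff (k := c) (l := c + 2)
  have := z.perm_eq_iff (k := c + 1) (l := c + 2)
  have := z.perm.injective.ne (show c ≠ c + 1 by lia)
  have := z.perm.injective.ne (show c ≠ c + 2 by lia)
  unfold IsDesc at *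
  simp only [perm_conj_apply hc', perm_conj_apply hc, Equiv.swap_apply_def]
  grind

end Braid

/-- The generator `u_c` of the id-Coxeter algebra, acting on functions on fixed-point-free
involutions. -/
def gen (n : ℕ) {R : Type*} [CommRing R] (b : R) (c : ℕ) : Module.End R (FPF n → R) :=
  descentOp b (IsDesc c) (conj c)

theorem gen_apply {R : Type*} [CommRing R] (b : R) (c : ℕ) (f : FPF n → R)
    (z : FPF n) :
    gen n b c f z = if IsDesc c z then f (z.conj c) + b * f z else 0 := rfl

theorem gen_of_le {R : Type*} [CommRing R] (b : R) (hc : n ≤ c + 1) : gen n b c = 0 :=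
  LinearMap.ext fun _ => funext fun _ => if_neg fun h => h.1.not_ge hc

theorem isIdCoxeter_gen (n : ℕ) {R : Type*} [CommRing R] (b : R) :
    IsIdCoxeter b (gen n b) (n - 1) where
  sq _ := descentOp_mul_self b fun _ => IsDesc.not_conj
  commute hcd := commute_descentOp b (fun _ => IsDesc.not_conj) (fun _ => IsDesc.not_conj)
    (conj_conj_comm hcd) (conj_eq_or_isDesc_conj_iff hcd)
  eq_zero hc := gen_of_le b (by lia)
  braid c := by
    rcases lt_or_ge (c + 2) n with hc | hc
    · exact descentOp_braid b (conj_braid hc) (fun _ h => isDesc_succ_iff h hc)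
        (fun _ => isDesc_iff_of_isDesc_succ) (fun _ => IsDesc.not_conj) (fun _ => IsDesc.not_conj)
    · rw [gen_of_le b (show n ≤ c + 1 + 1 from hc), zero_mul, zero_mul, mul_zero]

section Theta

variable {R : Type*} [CommRing R] (b : R)

theorem gen_single (c : ℕ) (z : FPF n) :
    gen n b c (Pi.single z 1) =
      if IsDesc c z then b • Pi.single z 1
      else if IsAsc c z then Pi.single (z.conj c) 1 else 0 := by
  simp only [← isDesc_conj_self]
  exact descentOp_single (D := IsDesc c) b (conj_involutive c) (fun _ => IsDesc.not_conj) z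

theorem MapsPair.gen_single_eq {z : FPF n} (h : z.MapsPair c d) (hcd : c + 2 ≤ d)
    (hd : d + 1 < n) : gen n b c (Pi.single z 1) = gen n b d (Pi.single z 1) := by
  simp only [gen_single, h.isDesc_iff hcd hd, h.isAsc_iff hcd hd, h.conj_eq hcd hd]

/-- The involution `Θ` as an element of `FPF n`. -/
def Θ (hn : n % 2 = 0) : FPF n := ⟨theta n hn, by
  have theta_val (i : Fin n) :
      (theta n hn i : ℕ) = if (i : ℕ) % 2 = 0 then (i : ℕ) + 1 else i - 1 := rfl
  refine ⟨Equiv.ext fun i => Fin.ext ?_, fun i hi => ?_⟩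
  · rw [Equiv.Perm.mul_apply, theta_val, theta_val, Equiv.Perm.one_apply]
    split_ifs <;> lia
  · have := congrArg Fin.val hi
    rw [theta_val] at this
    split_ifs at this <;> lia⟩

theorem perm_theta (hn : n % 2 = 0) {k : ℕ} (hk : k < n) :
    (Θ hn).perm k = if k % 2 = 0 then k + 1 else k - 1 :=
  natPerm_val (theta n hn) ⟨k, hk⟩

theorem perm_theta_of_even (hn : n % 2 = 0) {a : ℕ} (ha : Even a) (han : a < n) :
    (Θ hn).perm a = a + 1 := by
  rw [perm_theta hn han, if_pos (Nat.even_iff.mp ha)]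

theorem perm_theta_succ_of_even (hn : n % 2 = 0) {a : ℕ} (ha : Even a) (han : a < n) :
    (Θ hn).perm (a + 1) = a :=
  (Θ hn).perm_eq_iff.mp (perm_theta_of_even hn ha han)

theorem gen_single_theta (hn : n % 2 = 0) {a : ℕ} (ha : Even a) :
    gen n b a (Pi.single (Θ hn) 1) = 0 := by
  rcases lt_or_ge (a + 1) n with han | han
  · have h₁ := perm_theta_of_even hn ha (by lia)
    have h₂ := perm_theta_succ_of_even hn ha (by lia)
    rw [gen_single, if_neg fun h => h.2.2 h₁, if_neg]
    exact fun h => h.2.not_gt (by lia)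
  · rw [gen_of_le b han, LinearMap.zero_apply]

theorem mapsPair_conj_theta (hn : n % 2 = 0) {a : ℕ} (ha : Even a) (han : a + 3 < n) :
    ((Θ hn).conj (a + 1)).MapsPair a (a + 2) := by
  have h₁ := perm_theta_of_even hn ha (by lia)
  have h₂ := perm_theta_of_even hn (ha.add even_two) (by lia)
  simp only [MapsPair, perm_conj_apply (show a + 1 + 1 < n by lia), Equiv.swap_apply_def]
  grind

theorem gen_gen_single_theta (hn : n % 2 = 0) {a : ℕ} (ha : Even a) :
    gen n b a (gen n b (a + 1) (Pi.single (Θ hn) 1)) =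
      gen n b (a + 2) (gen n b (a + 1) (Pi.single (Θ hn) 1)) := by
  have := Nat.even_iff.mp ha
  rcases lt_or_ge (a + 3) n with han | han
  · have h₁ := perm_theta_succ_of_even hn ha (by lia)
    have h₂ := perm_theta_of_even hn (ha.add even_two) (by lia)
    have hasc : IsAsc (a + 1) (Θ hn) := ⟨by lia, by lia⟩
    rw [gen_single, if_neg fun h => h.2.1.not_gt hasc.2, if_pos hasc]
    exact (mapsPair_conj_theta hn ha han).gen_single_eq b le_rfl han
  · rw [gen_of_le b (show n ≤ a + 1 + 1 by lia), LinearMap.zero_apply, map_zero, map_zero]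

end Theta

end FPF

section Length

theorem invLen_mul_swap {n : ℕ} (w : Equiv.Perm (Fin n)) {i j : Fin n} (hij : i ⋖ j)
    (hw : w j < w i) : invLen w = invLen (w * Equiv.swap i j) + 1 := by
  have hmem : (i, j) ∈ Finset.univ.filter fun p : Fin n × Fin n => p.1 < p.2 ∧ w p.2 < w p.1 := by
    simp only [Finset.mem_filter_univ, hij.lt, hw, and_self]
  rw [invLen, invLen, ← Finset.card_erase_add_one hmem, Nat.add_right_cancel_iff]
  refine Finset.card_equiv ((Equiv.swap i j).prodCongr (Equiv.swap i j)) fun ⟨k, l⟩ => ?_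
  rw [Finset.mem_erase, Finset.mem_filter_univ, Finset.mem_filter_univ]
  simp only [Equiv.prodCongr_apply, Prod.map, Equiv.Perm.mul_apply, Equiv.swap_apply_self, Ne,
    Prod.mk.injEq]
  by_cases h₁ : k = i ∧ l = j
  · simp only [h₁, Equiv.swap_apply_left, Equiv.swap_apply_right, hij.lt.not_gt, and_self,
      not_true_eq_false, false_and]
  by_cases h₂ : k = j ∧ l = i
  · simp only [h₂, hij.lt.not_gt, hw.not_gt, and_false]
  · simp only [swap_lt_swap_iff hij h₁ h₂, h₁, not_false_eq_true, true_and]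

theorem invLen_inv {n : ℕ} (w : Equiv.Perm (Fin n)) : invLen w⁻¹ = invLen w :=
  Finset.card_equiv ((Equiv.prodComm _ _).trans (w⁻¹.prodCongr w⁻¹)) fun p => by
    simp [and_comm]

namespace FPF

variable {n : ℕ} {c : ℕ}

theorem apply_apply (z : FPF n) (i : Fin n) : z.1 (z.1 i) = i :=
  congrArg (· i) z.2.1

theorem card_lt_apply (z : FPF n) : 2 * (Finset.univ.filter fun i => i < z.1 i).card = n := by
  have flip : (Finset.univ.filter fun i => ¬ i < z.1 i).card =
      (Finset.univ.filter fun i => i < z.1 i).card :=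
    Finset.card_equiv z.1 fun i => by
      simp only [Finset.mem_filter_univ, z.apply_apply, not_lt, (z.2.2 i).le_iff_lt]
  have total := Finset.card_filter_add_card_filter_not (s := Finset.univ) fun i => i < z.1 i
  rw [flip, Finset.card_univ, Fintype.card_fin] at total
  lia

/-- The inversions `(i, j)` of `z` with `z j < i` and those with `i < z j` are exchanged by
`(i, j) ↦ (z j, z i)`; the remaining ones are the two-cycles. -/
theorem invLen_eq (z : FPF n) :
    invLen z.1 = 2 * fpfLen z.1 + (Finset.univ.filter fun i => i < z.1 i).card := by
  have hz := z.apply_apply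
  set inv := Finset.univ.filter fun p : Fin n × Fin n => p.1 < p.2 ∧ z.1 p.2 < z.1 p.1 with hinv
  have mem_inv (p) : p ∈ inv ↔ p.1 < p.2 ∧ z.1 p.2 < z.1 p.1 := Finset.mem_filter_univ p
  have small : (inv.filter fun p => z.1 p.2 < p.1).card = fpfLen z.1 := by
    rw [fpfLen, hinv, Finset.filter_filter]
    exact congrArg _ (Finset.filter_congr fun p _ => by tauto)
  have large : (inv.filter fun p => p.1 < z.1 p.2).card = fpfLen z.1 :=
    Finset.card_equiv ((Equiv.prodComm _ _).trans (z.1.prodCongr z.1)) fun p => by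
      simp only [Finset.mem_filter, Finset.mem_univ, true_and, mem_inv, Equiv.trans_apply,
        Equiv.prodComm_apply, Equiv.prodCongr_apply, Prod.map, Prod.swap, hz]
      tauto
  have cycles : (inv.filter fun p => z.1 p.2 = p.1).card =
      (Finset.univ.filter fun i => i < z.1 i).card := by
    rw [← Finset.card_image_of_injective (f := fun i => (i, z.1 i)) _
      fun _ _ h => (Prod.ext_iff.mp h).1]
    refine congrArg _ (Finset.ext fun ⟨k, l⟩ => ?_)
    rw [Finset.mem_filter, mem_inv, Finset.mem_image]
    simp only [Finset.mem_filter_univ, Prod.mk.injEq]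
    constructor
    · rintro ⟨⟨hkl, -⟩, rfl⟩
      exact ⟨z.1 l, by rwa [hz], rfl, hz l⟩
    · rintro ⟨i, hi, rfl, rfl⟩
      rw [hz]
      exact ⟨⟨hi, hi⟩, rfl⟩
  calc inv.card = (inv.filter fun p => z.1 p.2 < p.1).card +
        (inv.filter fun p => p.1 < z.1 p.2).card + (inv.filter fun p => z.1 p.2 = p.1).card := by
        rw [Finset.card_eq_sum_ones, Finset.card_filter, Finset.card_filter, Finset.card_filter,
          ← Finset.sum_add_distrib, ← Finset.sum_add_distrib]
        refine Finset.sum_congr rfl fun p _ => ?_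
        rcases lt_trichotomy (z.1 p.2) p.1 with h | h | h
        · simp [h, h.not_gt, h.ne]
        · simp [h]
        · simp [h, h.not_gt, h.ne']
    _ = 2 * fpfLen z.1 + (Finset.univ.filter fun i => i < z.1 i).card := by
        rw [small, large, cycles, two_mul]

theorem fpfLen_eq_of_isDesc {z : FPF n} (h : IsDesc c z) :
    fpfLen z.1 = fpfLen (z.conj c).1 + 1 := by
  obtain ⟨hc, hlt, hne⟩ := h
  set i : Fin n := ⟨c, Nat.lt_of_succ_lt hc⟩
  set j : Fin n := ⟨c + 1, hc⟩
  have hij : i ⋖ j := Fin.covBy_iff.mpr (Order.covBy_add_one c)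
  have hz : z.1 j < z.1 i := by
    rwa [Fin.lt_def, ← z.perm_val, ← z.perm_val]
  have hzi : z.1 i ≠ j := fun e => hne ((z.perm_val i).trans (congrArg Fin.val e))
  have hzs : (Equiv.swap i j * z.1) j < (Equiv.swap i j * z.1) i :=
    (swap_lt_swap_iff hij (fun e => hzi e.2) fun e => z.2.2 i e.2).mpr hz
  have inv_eq : (z.1 * Equiv.swap i j)⁻¹ = Equiv.swap i j * z.1 := by
    rw [mul_inv_rev, Equiv.swap_inv, inv_eq_of_mul_eq_one_left z.2.1]
  have conj_eq : (z.conj c).1 = Equiv.swap i j * z.1 * Equiv.swap i j := by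
    rw [coe_conj, swapAt_of_lt hc]
  have right_step := invLen_mul_swap z.1 hij hz
  have left_step := invLen_mul_swap (Equiv.swap i j * z.1) hij hzs
  rw [← inv_eq, invLen_inv, inv_eq, ← conj_eq] at left_step
  have := z.invLen_eq
  have := (z.conj c).invLen_eq
  have := z.card_lt_apply
  have := (z.conj c).card_lt_apply
  lia

theorem fpfLen_theta (hn : n % 2 = 0) : fpfLen (Θ hn).1 = 0 := by
  refine Finset.card_eq_zero.mpr (Finset.filter_eq_empty_iff.mpr fun ⟨i, j⟩ _ h => ?_)
  have hi := (perm_val (Θ hn) i).symm.trans (perm_theta hn i.isLt)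
  have hj := (perm_val (Θ hn) j).symm.trans (perm_theta hn j.isLt)
  simp only [Fin.lt_def] at h
  split_ifs at hi hj <;> lia

end FPF

/-- The boxes `(i, j)` with `i < j ≤ n - i` (in 1-indexed notation) which index the factors of
`spTop n`. -/
def triangle (n : ℕ) : Finset (Fin n × Fin n) :=
  Finset.univ.filter fun p => p.1 < p.2 ∧ (p.1 : ℕ) + (p.2 : ℕ) + 2 ≤ n

theorem mem_triangle {n : ℕ} {p : Fin n × Fin n} :
    p ∈ triangle n ↔ p.1 < p.2 ∧ (p.1 : ℕ) + (p.2 : ℕ) + 2 ≤ n := Finset.mem_filter_univ p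

theorem fpfLen_revPerm (n : ℕ) : fpfLen (revPerm n) = (triangle n).card :=
  Finset.card_equiv ((Equiv.prodComm _ _).trans ((revPerm n).prodCongr (revPerm n)))
    fun ⟨i, j⟩ => by
      have hrev (k : Fin n) : (revPerm n k : ℕ) = n - (k + 1) := Fin.val_rev k
      rw [Finset.mem_filter_univ, mem_triangle]
      simp only [Equiv.trans_apply, Equiv.prodComm_apply, Equiv.prodCongr_apply, Prod.map,
        Prod.swap, Fin.lt_def, hrev]
      lia

end Length

section Words

variable {n : ℕ}

/-- All boxes `(i, j)`, listed in `rowOrder`. -/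
def boxes (n : ℕ) : List (Fin n × Fin n) :=
  (List.finRange n).flatMap fun i => (List.finRange n).reverse.map fun j => (i, j)

theorem mem_boxes (p : Fin n × Fin n) : p ∈ boxes n := by
  simp [boxes]

instance : IsStrictOrder (Fin n × Fin n) rowOrder where
  irrefl p := by simp [rowOrder]
  trans p q r h h' := by
    unfold rowOrder at *
    lia

theorem pairwise_rowOrder_boxes (n : ℕ) : (boxes n).Pairwise rowOrder := by
  refine List.pairwise_flatMap.mpr ⟨fun i _ => ?_, ?_⟩
  · rw [List.pairwise_map, List.pairwise_reverse]
    exact (List.pairwise_lt_finRange n).imp fun h => .inr ⟨rfl, h⟩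
  · refine (List.pairwise_lt_finRange n).imp fun h p hp q hq => ?_
    obtain ⟨_, _, rfl⟩ := List.mem_map.mp hp
    obtain ⟨_, _, rfl⟩ := List.mem_map.mp hq
    exact .inl h

theorem nodup_boxes (n : ℕ) : (boxes n).Nodup :=
  (pairwise_rowOrder_boxes n).nodup

theorem toFinset_boxes (n : ℕ) : (boxes n).toFinset = Finset.univ :=
  Finset.eq_univ_of_forall fun p => List.mem_toFinset.mpr (mem_boxes p)

theorem toFinset_filter_boxes (S : Finset (Fin n × Fin n)) :
    ((boxes n).filter (· ∈ S)).toFinset = S := by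
  ext p
  simp [mem_boxes]

theorem length_filter_boxes (S : Finset (Fin n × Fin n)) :
    ((boxes n).filter (· ∈ S)).length = S.card := by
  rw [← List.toFinset_card_of_nodup ((nodup_boxes n).filter _), toFinset_filter_boxes]

/-- The letter `i + j` attached to the box `(i, j)`. -/
def letter (p : Fin n × Fin n) : ℕ := p.1 + p.2

theorem deltaHeckeWord_iff (hn : n % 2 = 0) (z : Equiv.Perm (Fin n))
    (S : Finset (Fin n × Fin n)) :
    DeltaHeckeWord n hn z S ↔
      heckeApply (((boxes n).filter (· ∈ S)).map letter) (theta n hn) = some z := by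
  have sorted : ((boxes n).filter (· ∈ S)).Pairwise rowOrder :=
    (pairwise_rowOrder_boxes n).sublist List.filter_sublist
  constructor
  · rintro ⟨L, hLS, hL, hz⟩
    have hL' : L.Pairwise rowOrder := List.isChain_iff_pairwise.mp hL
    have perm : L.Perm ((boxes n).filter (· ∈ S)) :=
      List.perm_of_nodup_nodup_toFinset_eq hL'.nodup sorted.nodup
        (hLS.trans (toFinset_filter_boxes S).symm)
    rwa [← perm.eq_of_pairwise' hL' sorted]
  · exact fun hz => ⟨_, toFinset_filter_boxes S, List.isChain_iff_pairwise.mpr sorted, hz⟩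

theorem prod_map_boxes {M : Type*} [Monoid M] (f : ℕ → ℕ → M) :
    ((boxes n).map fun p => f p.1 p.2).prod =
      ((List.range n).map fun i => ((List.range n).reverse.map (f i)).prod).prod := by
  rw [boxes, List.map_flatMap, List.flatMap_def, List.prod_flatten,
    ← List.map_coe_finRange_eq_range]
  simp only [List.map_map, ← List.map_reverse, Function.comp_def]

theorem prod_map_reverse_boxes {M : Type*} [Monoid M] (f : ℕ → ℕ → M) :
    ((boxes n).reverse.map fun p => f p.1 p.2).prod =
      ((List.range n).reverse.map fun i => ((List.range n).map (f i)).prod).prod := by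
  rw [boxes, List.reverse_flatMap, List.map_flatMap, List.flatMap_def, List.prod_flatten,
    ← List.map_coe_finRange_eq_range]
  simp only [List.map_map, ← List.map_reverse, List.reverse_reverse, Function.comp_def]

theorem prod_map_one_add {R E ι : Type*} [CommRing R] [Ring E] [Algebra R E] [DecidableEq ι]
    (f : ι → E) (y : ι → R) {L : List ι} (hL : L.Nodup) :
    (L.map fun p => 1 + y p • f p).prod =
      ∑ S ∈ L.toFinset.powerset, (∏ p ∈ S, y p) • ((L.filter (· ∈ S)).map f).prod := by
  induction L with
  | nil => simp
  | cons p L ih =>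
    obtain ⟨hpL, hL⟩ := List.nodup_cons.mp hL
    have hp : p ∉ L.toFinset := mt List.mem_toFinset.mp hpL
    rw [List.map_cons, List.prod_cons, ih hL, List.toFinset_cons, Finset.sum_powerset_insert hp,
      add_mul, one_mul, Finset.mul_sum, ← Finset.sum_add_distrib, ← Finset.sum_add_distrib]
    refine Finset.sum_congr rfl fun S hS => ?_
    have hpS : p ∉ S := fun h => hp (Finset.mem_powerset.mp hS h)
    have filter_insert : L.filter (· ∈ insert p S) = L.filter (· ∈ S) :=
      List.filter_congr fun q hq => by
        simp [show q ≠ p from fun e => hpL (e ▸ hq)]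
    rw [List.filter_cons_of_neg (by simpa using hpS), List.filter_cons_of_pos (by simp),
      filter_insert, List.map_cons, List.prod_cons, Finset.prod_insert hpS, smul_mul_smul_comm]

namespace FPF

theorem heckeStep_eq (c : ℕ) (z : FPF n) :
    heckeStep c z.1 =
      if IsDesc c z then some z.1 else if IsAsc c z then some (z.conj c).1 else none := by
  rcases lt_or_ge (c + 1) n with hc | hc
  · have h₁ : z.perm c = z.1 ⟨c, by lia⟩ := z.perm_val ⟨c, by lia⟩
    have h₂ : z.perm (c + 1) = z.1 ⟨c + 1, hc⟩ := z.perm_val ⟨c + 1, hc⟩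
    have hne := z.perm.injective.ne c.succ_ne_self
    have hcycle := z.perm_eq_iff (k := c) (l := c + 1)
    rw [h₁, h₂] at hcycle hne
    simp only [heckeStep, IsDesc, IsAsc, coe_conj, swapAt_of_lt hc, h₁, h₂, hc, Fin.lt_def,
      Fin.ext_iff, dif_pos, true_and]
    grind
  · rw [heckeStep, dif_neg hc.not_gt, if_neg fun h => h.1.not_ge hc,
      if_neg fun h => h.1.not_ge hc]

theorem heckeApply_append_singleton (l : List ℕ) (c : ℕ) (w : Equiv.Perm (Fin n)) :
    heckeApply (l ++ [c]) w = (heckeApply l w).bind (heckeStep c) := by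
  rw [heckeApply, List.foldl_append]
  rfl

variable {R : Type*} [CommRing R] (b : R)

theorem prod_gen_single (w : FPF n) (l : List ℕ) :
    (heckeApply l w.1 = none ∧ (l.reverse.map (gen n b)).prod (Pi.single w 1) = 0) ∨
      ∃ z k, heckeApply l w.1 = some z.1 ∧ l.length + fpfLen w.1 = fpfLen z.1 + k ∧
        (l.reverse.map (gen n b)).prod (Pi.single w 1) = b ^ k • Pi.single z 1 := by
  induction l using List.reverseRecOn with
  | nil => exact .inr ⟨w, 0, rfl, Nat.zero_add _, by simp⟩
  | append_singleton l c ih =>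
    rw [heckeApply_append_singleton, List.reverse_concat, List.map_cons, List.prod_cons,
      Module.End.mul_apply, List.length_append, List.length_singleton]
    rcases ih with ⟨hl, hv⟩ | ⟨z, k, hl, hk, hv⟩
    · exact .inl ⟨by rw [hl, Option.bind_none], by rw [hv, map_zero]⟩
    rw [hl, hv, Option.bind_some, heckeStep_eq, map_smul, gen_single]
    split_ifs with hdesc hasc
    · exact .inr ⟨z, k + 1, rfl, by lia, by rw [smul_smul, pow_succ]⟩
    · have hlen := fpfLen_eq_of_isDesc (z.isDesc_conj_self.mpr hasc)
      rw [z.conj_involutive c] at hlen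
      exact .inr ⟨z.conj c, k, rfl, by lia, rfl⟩
    · exact .inl ⟨rfl, smul_zero _⟩

theorem fpfLen_le_of_heckeApply {w z : FPF n} {l : List ℕ} (h : heckeApply l w.1 = some z.1) :
    fpfLen z.1 ≤ l.length + fpfLen w.1 := by
  rcases prod_gen_single (1 : ℤ) w l with ⟨hl, -⟩ | ⟨y, k, hl, hk, -⟩
  · cases hl.symm.trans h
  · rw [← Option.some_inj.mp (hl.symm.trans h)]
    lia

open scoped Classical in
theorem prod_gen_single_apply (w z : FPF n) (l : List ℕ) :
    (l.reverse.map (gen n b)).prod (Pi.single w 1) z =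
      if heckeApply l w.1 = some z.1 then b ^ (l.length + fpfLen w.1 - fpfLen z.1) else 0 := by
  rcases prod_gen_single b w l with ⟨hl, hv⟩ | ⟨y, k, hl, hk, hv⟩
  · rw [hv, hl, if_neg (Option.some_ne_none _).symm, Pi.zero_apply]
  · rw [hv, hl, hk, Pi.smul_apply, Pi.single_apply, smul_eq_mul, mul_ite, mul_one, mul_zero]
    by_cases hzy : z = y
    · rw [if_pos hzy, if_pos (by rw [hzy]), hzy, Nat.add_sub_cancel_left]
    · rw [if_neg hzy, if_neg fun h => hzy (Subtype.ext (Option.some_inj.mp h).symm)]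

end FPF

end Words

section PipeSum

variable {n : ℕ} {R : Type*} [CommRing R]

namespace IsIdCoxeter

variable {E : Type*} [Ring E] [Algebra R E] {b : R} {u : ℕ → E}

theorem rowProd_eq_prod_boxes (h : IsIdCoxeter b u (n - 1)) (x : ℕ → R) :
    rowProd u (n - 1) x n = ((boxes n).reverse.map fun p => 1 + x p.1 • u (letter p)).prod := by
  rw [rowProd, funext fun i => h.ascProd_eq_prod_range (show n - 1 ≤ i + n by lia) (x i)]
  exact (prod_map_reverse_boxes fun i j => fkFactor u (i + j) (x i)).symm

theorem mixedProd_eq_prod_boxes (h : IsIdCoxeter b u (n - 1)) (x : ℕ → R) :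
    mixedProd b u (n - 1) x n n =
      ((boxes n).map fun p =>
        1 + (if p ∈ triangle n then fglAdd b (x p.1) (x p.2) else 0) • u (letter p)).prod := by
  have row (i : ℕ) : descProd u (n - 1) (i + n) (x i) * spRow b u x i n =
      ((List.range n).reverse.map fun j => fkFactor u (i + j) (spWeight b x i j)).prod := by
    rw [descProd_of_le (by lia), one_mul, spRow]
  rw [mixedProd, funext row, ← prod_map_boxes fun i j => fkFactor u (i + j) (spWeight b x i j)]
  congr 2 with p
  by_cases hp : (p.1 : ℕ) + p.2 + 2 ≤ n
  · simp only [spWeight, fkFactor, letter, mem_triangle, hp, and_true, Fin.lt_def]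
  · rw [fkFactor, letter, h.eq_zero (by lia), smul_zero, smul_zero]

end IsIdCoxeter

/-- The sum of `b ^ (|S| - ℓ_fpf(z)) x^S` over all `S` such that `δ(S)` is a symplectic Hecke word
for `z`, with parameter `b` and variables `x` in an arbitrary ring. -/
def pipeSum (hn : n % 2 = 0) (b : R) (x : Fin n → R) (z : FPF n) : R :=
  ∑ S ∈ @Finset.filter (Finset (Fin n × Fin n)) (fun S => DeltaHeckeWord n hn z.1 S)
    (Classical.decPred _) Finset.univ, b ^ (S.card - fpfLen z.1) * ∏ p ∈ S, x p.1

namespace FPF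

theorem rowProd_gen_single_theta (hn : n % 2 = 0) (b : R) (x : ℕ → R) (z : FPF n) :
    rowProd (gen n b) (n - 1) x n (Pi.single (Θ hn) 1) z = pipeSum hn b (fun i => x i) z := by
  rw [(isIdCoxeter_gen n b).rowProd_eq_prod_boxes,
    prod_map_one_add _ _ (List.nodup_reverse.mpr (nodup_boxes n)), List.toFinset_reverse,
    toFinset_boxes, Finset.powerset_univ, pipeSum,
    Finset.sum_filter, LinearMap.sum_apply, Finset.sum_apply]
  refine Finset.sum_congr rfl fun S _ => ?_
  have hword := prod_gen_single_apply b (Θ hn) z (((boxes n).filter (· ∈ S)).map letter)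
  rw [← List.map_reverse, List.map_map, ← List.filter_reverse, List.length_map,
    length_filter_boxes, fpfLen_theta, add_zero] at hword
  rw [LinearMap.smul_apply, Pi.smul_apply, smul_eq_mul, mul_comm]
  refine (congrArg (· * _) hword).trans ?_
  simp only [deltaHeckeWord_iff, ite_mul, zero_mul]
  rfl

end FPF

theorem map_pipeSum {R' : Type*} [CommRing R'] (φ : R →+* R') (hn : n % 2 = 0) (b : R)
    (x : Fin n → R) (z : FPF n) : φ (pipeSum hn b x z) = pipeSum hn (φ b) (φ ∘ x) z := by
  simp only [pipeSum, map_sum, map_mul, map_pow, map_prod, Function.comp_apply]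

theorem pipeSum_zero_theta (hn : n % 2 = 0) (b : R) : pipeSum hn b 0 (FPF.Θ hn) = 1 := by
  have empty_word : DeltaHeckeWord n hn (FPF.Θ hn).1 ∅ := ⟨[], rfl, .nil, rfl⟩
  rw [pipeSum, Finset.sum_filter, Finset.sum_eq_single_of_mem ∅ (Finset.mem_univ _),
    if_pos empty_word, Finset.card_empty, Nat.zero_sub, pow_zero, Finset.prod_empty, mul_one]
  intro S _ hS
  obtain ⟨p, hp⟩ := Finset.nonempty_iff_ne_empty.mpr hS
  rw [Finset.prod_eq_zero hp rfl, mul_zero, ite_self]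

/-- The symmetry of `rowProd` in `x_i` and `x_{i+1}` up to a factor, read off at a descent of `z`;
the generator `u_i` contributes `z.conj i`. -/
theorem pipeSum_comp_swap (hn : n % 2 = 0) (b : R) (x : Fin n → R) {z : FPF n} {i j : Fin n}
    (hij : (j : ℕ) = i + 1) (h : FPF.IsDesc i z) :
    (1 + b * x i) * pipeSum hn b (x ∘ Equiv.swap i j) z =
      (1 + b * x i) * pipeSum hn b x z -
        (x i - x j) * (pipeSum hn b x (z.conj i) + b * pipeSum hn b x z) := by
  have restrict_swap : (fun k : Fin n => Function.extend Fin.val x 0 (Equiv.swap (i : ℕ) j k)) =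
      x ∘ Equiv.swap i j := by
    funext k
    rw [Function.comp_apply, ← Fin.val_injective.extend_apply x 0]
    exact congrArg _ (Fin.valEmbedding.swap_apply i j k)
  have restrict (k : Fin n) : Function.extend Fin.val x 0 k = x k :=
    Fin.val_injective.extend_apply x 0 k
  have key := congrArg (fun T : Module.End R (FPF n → R) => T (Pi.single (FPF.Θ hn) 1) z)
    ((FPF.isIdCoxeter_gen n b).rowProd_comp_swap (Function.extend Fin.val x 0)
      (show i.1 + 2 ≤ n by lia))
  simp only [← hij, LinearMap.smul_apply, LinearMap.sub_apply, Module.End.mul_apply,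
    Module.End.one_apply, Pi.smul_apply, Pi.sub_apply, smul_eq_mul, FPF.gen_apply, if_pos h,
    FPF.rowProd_gen_single_theta, Function.comp_apply, restrict] at key
  rwa [restrict_swap] at key

/-- The element `n ⋯ 3 2 1` of `FPF n`. -/
def FPF.rev (hn : n % 2 = 0) : FPF n :=
  ⟨revPerm n, Equiv.ext Fin.rev_rev, fun i hi => by
    have := congrArg Fin.val (show i.rev = i from hi)
    rw [Fin.val_rev] at this
    lia⟩

open scoped Classical in
theorem pipeSum_eq_sum_powerset_triangle (hn : n % 2 = 0) (b : R) (x : Fin n → R) (z : FPF n) :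
    pipeSum hn b x z = ∑ S ∈ (triangle n).powerset,
      if heckeApply (((boxes n).filter (· ∈ S)).map letter).reverse (theta n hn) = some z.1
      then b ^ (S.card - fpfLen z.1) * ∏ p ∈ S, fglAdd b (x p.1) (x p.2) else 0 := by
  have restrict (k : Fin n) : Function.extend Fin.val x 0 k = x k :=
    Fin.val_injective.extend_apply x 0 k
  have key := FPF.rowProd_gen_single_theta hn b (Function.extend Fin.val x 0) z
  simp only [restrict] at key
  rw [← key, (FPF.isIdCoxeter_gen n b).rowProd_apply_eq_mixedProd
    (fun a => FPF.gen_single_theta b hn) (fun a => FPF.gen_gen_single_theta b hn),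
    (FPF.isIdCoxeter_gen n b).mixedProd_eq_prod_boxes, prod_map_one_add _ _ (nodup_boxes n),
    toFinset_boxes, Finset.powerset_univ, LinearMap.sum_apply, Finset.sum_apply,
    ← Finset.sum_subset (Finset.subset_univ (triangle n).powerset)]
  · refine Finset.sum_congr rfl fun S hS => ?_
    have hword := FPF.prod_gen_single_apply b (FPF.Θ hn) z
      (((boxes n).filter (· ∈ S)).map letter).reverse
    rw [List.reverse_reverse, List.map_map, List.length_reverse, List.length_map,
      length_filter_boxes, FPF.fpfLen_theta, add_zero] at hword
    have hweight : ∏ p ∈ S, (if p ∈ triangle n then fglAdd b (x p.1) (x p.2) else 0) =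
        ∏ p ∈ S, fglAdd b (x p.1) (x p.2) :=
      Finset.prod_congr rfl fun p hp => if_pos (Finset.mem_powerset.mp hS hp)
    simp only [restrict]
    rw [LinearMap.smul_apply, Pi.smul_apply, smul_eq_mul, mul_comm, hweight]
    refine (congrArg (· * _) hword).trans ?_
    simp only [ite_mul, zero_mul]
    rfl
  · intro S _ hS
    obtain ⟨p, hp, hp'⟩ := Finset.not_subset.mp (mt Finset.mem_powerset.mpr hS)
    rw [Finset.prod_eq_zero hp (if_neg hp'), zero_smul, LinearMap.zero_apply, Pi.zero_apply]

/-- The top value is `0` or the product over the triangle, since all other subsets of the triangle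
are too short to reach `n ⋯ 3 2 1`. -/
theorem pipeSum_rev (hn : n % 2 = 0) (b : R) (x : Fin n → R) :
    pipeSum hn b x (FPF.rev hn) = 0 ∨
      pipeSum hn b x (FPF.rev hn) = ∏ p ∈ triangle n, fglAdd b (x p.1) (x p.2) := by
  classical
  have hlen : fpfLen (FPF.rev hn).1 = (triangle n).card := fpfLen_revPerm n
  rw [pipeSum_eq_sum_powerset_triangle,
    Finset.sum_eq_single_of_mem (triangle n) (Finset.mem_powerset_self _)]
  · rw [hlen, Nat.sub_self, pow_zero, one_mul]
    exact (ite_eq_or_eq _ _ _).symm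
  · intro S hS hne
    refine if_neg fun h => hne (Finset.eq_of_subset_of_card_le (Finset.mem_powerset.mp hS) ?_)
    have := FPF.fpfLen_le_of_heckeApply (w := FPF.Θ hn) h
    rwa [hlen, FPF.fpfLen_theta, List.length_reverse, List.length_map, length_filter_boxes] at this

end PipeSum

section Uniqueness

variable {n : ℕ}

namespace FPF

theorem eq_rev_of_not_isAsc (hn : n % 2 = 0) {z : FPF n} (h : ∀ c, ¬ IsAsc c z) : z = rev hn := by
  have anti : StrictAnti z.1 := by
    cases n with
    | zero => exact Subsingleton.strictAnti _
    | succ m =>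
      refine Fin.strictAnti_iff_succ_lt.mpr fun i => ?_
      have hne : z.1 i.succ ≠ z.1 i.castSucc := z.1.injective.ne (Fin.castSucc_lt_succ).ne'
      refine lt_of_le_of_ne (not_lt.mp fun hlt => h i ⟨by lia, ?_⟩) hne
      exact (z.perm_val i.castSucc).trans_lt ((Fin.lt_def.mp hlt).trans_eq (z.perm_val i.succ).symm)
  refine Subtype.ext (Equiv.coe_fn_injective (Fin.rev_injective.comp_left ?_))
  refine ((Fin.rev_strictAnti.comp anti).range_inj
    (Fin.rev_strictAnti.comp Fin.rev_strictAnti)).mp ?_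
  exact ((Fin.rev_surjective.comp z.1.surjective).range_eq).trans
    ((Fin.rev_surjective.comp Fin.rev_surjective).range_eq).symm

theorem induction_from_rev (hn : n % 2 = 0) {P : FPF n → Prop} (base : P (rev hn))
    (step : ∀ c z, IsDesc c z → P z → P (z.conj c)) (z : FPF n) : P z := by
  have bound (z : FPF n) : fpfLen z.1 ≤ n * n :=
    (Finset.card_le_univ _).trans_eq (by simp)
  induction hk : n * n - fpfLen z.1 using Nat.strong_induction_on generalizing z with
  | _ k ih =>
    by_cases hasc : ∃ c, IsAsc c z
    · obtain ⟨c, hc⟩ := hasc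
      have hdesc := z.isDesc_conj_self.mpr hc
      have hlen := fpfLen_eq_of_isDesc hdesc
      rw [z.conj_involutive c] at hlen
      have := bound (z.conj c)
      have := step c _ hdesc (ih _ (by lia) _ rfl)
      rwa [z.conj_involutive c] at this
    · rw [eq_rev_of_not_isAsc hn (not_exists.mp hasc)]
      exact base

end FPF

/-- The recursion defining the symplectic Grothendieck polynomials, for families indexed by `FPF n`
and without the condition on the top element. -/
def IsDivDiffFamily (F : FPF n → MvPolynomial (Fin n) Rb) : Prop :=
  ∀ ⦃i j : Fin n⦄ ⦃z : FPF n⦄, (j : ℕ) = i + 1 → FPF.IsDesc i z →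
    IsDivDiffB i j (F z) (F (z.conj i))

namespace IsDivDiffFamily

theorem ext (hn : n % 2 = 0) {F F' : FPF n → MvPolynomial (Fin n) Rb} (hF : IsDivDiffFamily F)
    (hF' : IsDivDiffFamily F') (top : F (FPF.rev hn) = F' (FPF.rev hn)) : F = F' := by
  funext z
  refine FPF.induction_from_rev hn (P := fun z => F z = F' z) top (fun c z hc hz => ?_) z
  have h := hF (i := ⟨c, Nat.lt_of_succ_lt hc.1⟩) (j := ⟨c + 1, hc.1⟩) rfl hc
  have h' := hF' (i := ⟨c, Nat.lt_of_succ_lt hc.1⟩) (j := ⟨c + 1, hc.1⟩) rfl hc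
  rw [IsDivDiffB, hz, ← h'] at h
  refine mul_left_cancel₀ (sub_ne_zero.mpr fun hX => ?_) h
  exact c.succ_ne_self (Fin.mk.inj (X_injective hX)).symm

protected theorem zero : IsDivDiffFamily (0 : FPF n → MvPolynomial (Fin n) Rb) :=
  fun _ _ _ _ _ => by simp [IsDivDiffB]

protected theorem pipeSum (hn : n % 2 = 0) : IsDivDiffFamily (pipeSum hn (C bb) X) := by
  intro i j z hij hz
  have rename_pipeSum : rename (Equiv.swap i j) (pipeSum hn (C bb) X z) =
      pipeSum hn (C bb) (X ∘ Equiv.swap i j) z := by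
    have := map_pipeSum (rename (R := Rb) (Equiv.swap i j)).toRingHom hn (C bb) X z
    simpa [Function.comp_def] using this
  rw [IsDivDiffB, map_mul, rename_pipeSum]
  simp only [map_add, map_one, map_mul, rename_C, rename_X, Equiv.swap_apply_right]
  linear_combination pipeSum_comp_swap hn (C bb) X hij hz

end IsDivDiffFamily

theorem IsSpFam.isDivDiffFamily {G : Equiv.Perm (Fin n) → MvPolynomial (Fin n) Rb}
    (hG : IsSpFam n G) : IsDivDiffFamily fun z => G z.1 := by
  intro i j z hij hz
  obtain ⟨hi, hlt, hne⟩ := hz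
  rw [← hij, z.perm_val, z.perm_val] at hlt
  rw [z.perm_val, ← hij] at hne
  have hzi : z.1 i ≠ j := fun e => hne (congrArg Fin.val e)
  have hzj : z.1 j ≠ i := fun e => hzi (by rw [← e, z.apply_apply])
  have conj_eq : (z.conj i).1 = Equiv.swap i j * z.1 * Equiv.swap i j := by
    obtain rfl : j = ⟨i + 1, hi⟩ := Fin.ext hij
    rw [FPF.coe_conj, swapAt_of_lt hi]
  simpa only [conj_eq] using hG.2 z.1 z.2 i j hij hzi hzj hlt

/-- If the top value were `0`, then so would be the whole family, but its value at `Θ` has constant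
term `1`. -/
theorem pipeSum_rev_eq_spTop (hn : n % 2 = 0) :
    pipeSum hn (C bb) X (FPF.rev hn) = spTop n := by
  refine (pipeSum_rev hn (C bb) X).resolve_left fun h => one_ne_zero (α := Rb) ?_
  have vanish := IsDivDiffFamily.ext hn (.pipeSum hn) .zero h
  calc (1 : Rb) = pipeSum hn bb 0 (FPF.Θ hn) := (pipeSum_zero_theta hn bb).symm
    _ = constantCoeff (pipeSum hn (C bb) X (FPF.Θ hn)) := by
      rw [map_pipeSum, constantCoeff_C]
      congr 1
      ext i
      simp
    _ = 0 := by rw [vanish, Pi.zero_apply, map_zero]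

end Uniqueness

theorem statement3 (n : ℕ) (hpos : 0 < n) (hev : n % 2 = 0)
    (G : Equiv.Perm (Fin n) → MvPolynomial (Fin n) Rb) (hG : IsSpFam n G)
    (z : Equiv.Perm (Fin n)) (hz : IsFPF z) :
    G z = ∑ S ∈ @Finset.filter (Finset (Fin n × Fin n))
        (fun S => DeltaHeckeWord n hev z S) (Classical.decPred _) Finset.univ,
      C (bb ^ (S.card - fpfLen z)) * ∏ p ∈ S, X p.1 := by
  have same_top : G (revPerm n) = pipeSum hev (C bb) X (FPF.rev hev) :=
    hG.1.trans (pipeSum_rev_eq_spTop hev).symm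
  have same_family := hG.isDivDiffFamily.ext hev (.pipeSum hev) same_top
  calc G z = pipeSum hev (C bb) X ⟨z, hz⟩ := congrFun same_family ⟨z, hz⟩
    _ = _ := by simp only [pipeSum, C_pow]

end
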